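/- arXiv:2201.06501 — 2 statements merged into one kernel-verified Lean document; each statement's English description precedes it below -/
import Mathlib

section
/- For natural numbers i, j, s with 0 ≤ i ≤ j ≤ s-1: the sum ∑_{ℓ=0}^{j-i} (-1)^ℓ · C(s-ℓ, j-ℓ)^{-1} · C(2s-ℓ, j-i-ℓ) · C(i+j+1, ℓ) equals (s-j) · ((s-1-(i+j)/2)! · ((i+j)/2)!) / ((s-(j-i)/2)! · ((j-i)/2)!) when i ≡ j (mod 2), and equals 0 when i ≢ j (mod 2). Here C(a,b) denotes the binomial coefficient. -/
/-!
Up to the factor `C(2s, j-i) / C(s, j)`, the sum is the terminating hypergeometric series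
`₃F₂(-n, 2d + n - 1, c; d, 2c; 1)` with `n = j - i`, `c = -s` and `d = -j`, which Watson's theorem
evaluates. Writing `S n d` for this series with `c` fixed, a Zeilberger-type telescoping gives
`d (2c + n + 1) S (n + 2) d = (n + 1) (d - c) S n (d + 1)`. Since `S 0 d = 1` and `S 1 d = 0`,
the series vanishes for odd `n` and is a quotient of Pochhammer symbols for even `n`.
-/

theorem ascPochhammer_succ_eval_left {S : Type*} [CommSemiring S] (k : ℕ) (x : S) :
    (ascPochhammer S (k + 1)).eval x = x * (ascPochhammer S k).eval (x + 1) := by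
  simp [ascPochhammer_succ_left, Polynomial.eval_comp]

theorem ascPochhammer_eval_neg_natCast {R : Type*} [Ring R] (n k : ℕ) :
    (ascPochhammer R k).eval (-(n : R)) = (-1) ^ k * n.descFactorial k := by
  rw [ascPochhammer_eval_neg_eq_descPochhammer, descPochhammer_eval_eq_descFactorial]

section Watson

variable {K : Type*} [Field K]

/-- The `k`-th term `(a)ₖ (b)ₖ (c)ₖ / (k! (d)ₖ (e)ₖ)` of the hypergeometric series
`₃F₂(a, b, c; d, e; 1)`. It is `0` where a denominator vanishes. -/
noncomputable def hypergeometricTerm (a b c d e : K) (k : ℕ) : K :=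
  (ascPochhammer K k).eval a * (ascPochhammer K k).eval b * (ascPochhammer K k).eval c /
    (k.factorial * (ascPochhammer K k).eval d * (ascPochhammer K k).eval e)

@[simp]
theorem hypergeometricTerm_zero (a b c d e : K) : hypergeometricTerm a b c d e 0 = 1 := by
  simp [hypergeometricTerm]

theorem hypergeometricTerm_neg_natCast_of_lt (b c d e : K) {n k : ℕ} (hk : n < k) :
    hypergeometricTerm (-n : K) b c d e k = 0 := by
  simp [hypergeometricTerm, ascPochhammer_eval_neg_coe_nat_of_lt hk]

theorem hypergeometricTerm_add_two (a b c e : K) {d : K} {k : ℕ} (hd : d ≠ 0) (hdk : d + k ≠ 0) :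
    a * (a + 1) * (d + k) * hypergeometricTerm (a + 2) b c (d + 1) e k =
      (a + k) * (a + 1 + k) * d * hypergeometricTerm a b c d e k := by
  have hnum : a * (a + 1) * (ascPochhammer K k).eval (a + 2) =
      (a + k) * (a + 1 + k) * (ascPochhammer K k).eval a :=
    calc a * (a + 1) * (ascPochhammer K k).eval (a + 2)
        = (ascPochhammer K (k + 2)).eval a := by
          rw [ascPochhammer_succ_eval_left, ascPochhammer_succ_eval_left, add_assoc a,
            one_add_one_eq_two, mul_assoc]
      _ = (a + k) * (a + 1 + k) * (ascPochhammer K k).eval a := by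
          rw [ascPochhammer_succ_eval, ascPochhammer_succ_eval]
          push_cast
          ring
  have hden : (ascPochhammer K k).eval (d + 1) = (ascPochhammer K k).eval d * (d + k) / d := by
    rw [← ascPochhammer_succ_eval, ascPochhammer_succ_eval_left, mul_div_cancel_left₀ _ hd]
  simp only [hypergeometricTerm, hden]
  field_simp
  linear_combination (ascPochhammer K k).eval b * (ascPochhammer K k).eval c /
    (k.factorial * (ascPochhammer K k).eval d * (ascPochhammer K k).eval e) * hnum

variable [CharZero K]

theorem hypergeometricTerm_succ (a b c : K) {d e : K} {k : ℕ} (hd : d + k ≠ 0) (he : e + k ≠ 0) :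
    (k + 1) * (d + k) * (e + k) * hypergeometricTerm a b c d e (k + 1) =
      (a + k) * (b + k) * (c + k) * hypergeometricTerm a b c d e k := by
  have hk : (k : K) + 1 ≠ 0 := Nat.cast_add_one_ne_zero k
  have hratio : hypergeometricTerm a b c d e (k + 1) = hypergeometricTerm a b c d e k *
      ((a + k) * (b + k) * (c + k) / ((k + 1) * (d + k) * (e + k))) := by
    simp only [hypergeometricTerm, ascPochhammer_succ_eval, Nat.factorial_succ, Nat.cast_mul,
      Nat.cast_add_one]
    rw [div_mul_div_comm]
    congr 1 <;> ring
  rw [hratio]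
  field_simp

/-- The `k`-th term of the series `₃F₂(a, b, c; d, 2c; 1)` of Watson's theorem. The constraint
`d = (a + b + 1) / 2` is encoded by eliminating `b`. -/
noncomputable def watsonTerm (a c d : K) (k : ℕ) : K :=
  hypergeometricTerm a (2 * d - a - 1) c d (2 * c) k

theorem watsonTerm_telescope (a c : K) {d : K} {k : ℕ} (hd : d ≠ 0) (hdk : d + k ≠ 0)
    (hck : 2 * c + k ≠ 0) :
    a * (d * (2 * c - a - 1) * watsonTerm a c d k +
        (a + 1) * (d - c) * watsonTerm (a + 2) c (d + 1) k) =
      d * ((k + 1) * (2 * c + k) * watsonTerm a c d (k + 1) -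
        k * (2 * c + k - 1) * watsonTerm a c d k) := by
  have hshift := hypergeometricTerm_add_two a (2 * d - a - 1) c (2 * c) hd hdk
  have hsucc := hypergeometricTerm_succ a (2 * d - a - 1) c hdk hck
  have hb : 2 * (d + 1) - (a + 2) - 1 = 2 * d - a - 1 := by ring
  simp only [watsonTerm, hb]
  apply mul_left_cancel₀ hdk
  linear_combination (d - c) * hshift - d * hsucc

theorem sum_range_watsonTerm_add_two (a c : K) {d : K} {N : ℕ} (hd : ∀ k < N, d + k ≠ 0)
    (hc : ∀ k < N, 2 * c + k ≠ 0) :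
    a * (d * (2 * c - a - 1) * ∑ k ∈ Finset.range N, watsonTerm a c d k +
        (a + 1) * (d - c) * ∑ k ∈ Finset.range N, watsonTerm (a + 2) c (d + 1) k) =
      d * (N * (2 * c + N - 1) * watsonTerm a c d N) := by
  induction N with
  | zero => simp
  | succ N ih =>
    have hd₀ : d ≠ 0 := by simpa using hd 0 N.succ_pos
    have htel := watsonTerm_telescope a c hd₀ (hd N N.lt_succ_self) (hc N N.lt_succ_self)
    rw [Finset.sum_range_succ, Finset.sum_range_succ]
    push_cast
    linear_combination ih (fun k hk ↦ hd k (by lia)) (fun k hk ↦ hc k (by lia)) + htel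

/-- The terminating series `₃F₂(-n, 2d + n - 1, c; d, 2c; 1)` of Watson's theorem. -/
noncomputable def watsonSum (n : ℕ) (c d : K) : K :=
  ∑ k ∈ Finset.range (n + 1), watsonTerm (-n : K) c d k

theorem watsonSum_add_two (n : ℕ) {c d : K} (hd : ∀ k < n + 2, d + k ≠ 0)
    (hc : ∀ k < n + 2, 2 * c + k ≠ 0) :
    d * (2 * c + n + 1) * watsonSum (n + 2) c d = (n + 1) * (d - c) * watsonSum n c (d + 1) := by
  have hn : (n : K) + 2 ≠ 0 := mod_cast (n + 1).cast_add_one_ne_zero (R := K)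
  have hpartial := sum_range_watsonTerm_add_two (-(n + 2 : ℕ) : K) c hd hc
  have hshort : watsonSum n c (d + 1) =
      ∑ k ∈ Finset.range (n + 2), watsonTerm (-(n + 2 : ℕ) + 2 : K) c (d + 1) k := by
    have ha : (-(n + 2 : ℕ) + 2 : K) = -n := by push_cast; ring
    rw [Finset.sum_range_succ, ha, watsonTerm,
      hypergeometricTerm_neg_natCast_of_lt _ _ _ _ n.lt_succ_self, add_zero, watsonSum]
  rw [hshort, watsonSum, Finset.sum_range_succ]
  apply mul_left_cancel₀ hn
  push_cast at hpartial ⊢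
  linear_combination -hpartial

theorem watsonSum_two_mul (m : ℕ) {c d : K} (hd : ∀ k < 2 * m, d + k ≠ 0)
    (hc : ∀ k < 2 * m, 2 * c + k ≠ 0) :
    watsonSum (2 * m) c d =
      (ascPochhammer K m).eval (1 / 2) * (ascPochhammer K m).eval (d - c) /
        ((ascPochhammer K m).eval (c + 1 / 2) * (ascPochhammer K m).eval d) := by
  induction m generalizing d with
  | zero => simp [watsonSum, watsonTerm]
  | succ m ih =>
    have hd₀ : d ≠ 0 := by simpa using hd 0 (by lia)
    have hd₁ : ∀ k < 2 * m, d + 1 + k ≠ 0 := fun k hk ↦ by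
      simpa [add_assoc, add_comm (k : K)] using hd (k + 1) (by lia)
    have hc₁ : 2 * c + (2 * m : ℕ) + 1 ≠ 0 := by
      rw [add_assoc]
      exact_mod_cast hc (2 * m + 1) (by lia)
    have hrec := watsonSum_add_two (2 * m) hd hc
    rw [ih hd₁ fun k hk ↦ hc k (by lia)] at hrec
    have hc₂ : c + 1 / 2 + m ≠ 0 := by
      contrapose! hc₁
      push_cast
      linear_combination 2 * hc₁
    have hclosed : (ascPochhammer K (m + 1)).eval (1 / 2) *
          (ascPochhammer K (m + 1)).eval (d - c) /
        ((ascPochhammer K (m + 1)).eval (c + 1 / 2) * (ascPochhammer K (m + 1)).eval d) =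
        (1 / 2 + m) * (d - c) / (d * (c + 1 / 2 + m)) *
          ((ascPochhammer K m).eval (1 / 2) * (ascPochhammer K m).eval (d + 1 - c) /
            ((ascPochhammer K m).eval (c + 1 / 2) * (ascPochhammer K m).eval (d + 1))) := by
      simp only [ascPochhammer_succ_eval _ (1 / 2 : K), ascPochhammer_succ_eval _ (c + 1 / 2),
        ascPochhammer_succ_eval_left _ d, ascPochhammer_succ_eval_left _ (d - c),
        sub_add_eq_add_sub]
      rw [div_mul_div_comm]
      congr 1 <;> ring
    rw [hclosed, div_mul_eq_mul_div, eq_div_iff (mul_ne_zero hd₀ hc₂)]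
    push_cast [mul_add_one] at hrec ⊢
    linear_combination hrec / 2

theorem watsonSum_one {c d : K} (hc : c ≠ 0) (hd : d ≠ 0) : watsonSum 1 c d = 0 := by
  have hcd : 2 * d * c / (d * (2 * c)) = 1 := by field_simp
  simp [watsonSum, watsonTerm, hypergeometricTerm, Finset.sum_range_succ, neg_div, hcd]

theorem watsonSum_two_mul_add_one (m : ℕ) {c d : K} (hd : ∀ k < 2 * m + 1, d + k ≠ 0)
    (hc : ∀ k < 2 * m + 1, 2 * c + k ≠ 0) : watsonSum (2 * m + 1) c d = 0 := by
  have hd₀ : d ≠ 0 := by simpa using hd 0 (by lia)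
  induction m generalizing d with
  | zero => exact watsonSum_one (by simpa using hc 0 (by lia)) hd₀
  | succ m ih =>
    have hd₁ : ∀ k < 2 * m + 1, d + 1 + k ≠ 0 := fun k hk ↦ by
      simpa [add_assoc, add_comm (k : K)] using hd (k + 1) (by lia)
    have hc₁ : 2 * c + (2 * m + 1 : ℕ) + 1 ≠ 0 := by
      rw [add_assoc]
      exact_mod_cast hc (2 * m + 2) (by lia)
    have hrec := watsonSum_add_two (2 * m + 1) hd hc
    rw [ih hd₁ (fun k hk ↦ hc k (by lia)) (by simpa using hd₁ 0 (by lia)), mul_zero] at hrec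
    exact (mul_eq_zero.mp hrec).resolve_left (mul_ne_zero hd₀ hc₁)

end Watson

theorem choose_mul_descFactorial {l k : ℕ} (n : ℕ) (h : l ≤ k) :
    n.choose k * k.descFactorial l = n.descFactorial l * (n - l).choose (k - l) := by
  rw [Nat.descFactorial_eq_factorial_mul_choose, Nat.descFactorial_eq_factorial_mul_choose,
    mul_left_comm, Nat.choose_mul h, mul_assoc]

theorem factorial_mul_ascFactorial_of_pos {a m : ℕ} (h : 0 < a + m) :
    a.factorial * a.ascFactorial m = a * (a + m - 1).factorial := by
  rcases a.eq_zero_or_pos with rfl | ha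
  · obtain ⟨m, rfl⟩ := Nat.exists_eq_add_one.mpr (by simpa using h)
    simp [Nat.zero_ascFactorial]
  · rw [← Nat.factorial_mul_ascFactorial' a m ha, ← Nat.mul_factorial_pred ha.ne', mul_assoc]

section Specialization

variable {K : Type*} [Field K] [CharZero K]

theorem hypergeometricTerm_neg_natCast (p : ℕ) {j l n s t : ℕ} (hlj : l ≤ j) (hln : l ≤ n)
    (hls : l ≤ s) (hlt : l ≤ t) :
    (-1 : K) ^ l * ((s - l).choose (j - l) : K)⁻¹ * (t - l).choose (n - l) * p.choose l =
      (s.choose j : K)⁻¹ * t.choose n *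
        hypergeometricTerm (-n : K) (-p) (-s) (-j) (-t) l := by
  have descFactorial_ne_zero {a : ℕ} (h : l ≤ a) : (a.descFactorial l : K) ≠ 0 := by
    simpa [Nat.descFactorial_eq_zero_iff_lt] using h
  have choose_sub {a b : ℕ} (ha : l ≤ a) (hb : l ≤ b) : ((a - l).choose (b - l) : K) =
      a.choose b * b.descFactorial l / a.descFactorial l := by
    rw [eq_div_iff (descFactorial_ne_zero ha), mul_comm]
    exact_mod_cast (choose_mul_descFactorial a hb).symm
  have hl : (l.factorial : K) ≠ 0 := mod_cast l.factorial_ne_zero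
  simp only [choose_sub hls hlj, choose_sub hlt hln, hypergeometricTerm,
    ascPochhammer_eval_neg_natCast, p.descFactorial_eq_factorial_mul_choose, Nat.cast_mul]
  have := descFactorial_ne_zero hlj
  have := descFactorial_ne_zero hls
  have := descFactorial_ne_zero hlt
  field_simp

theorem ascPochhammer_eval_half_sub_natCast_ne_zero (s m : ℕ) :
    (ascPochhammer K m).eval (-s + 1 / 2 : K) ≠ 0 := by
  rw [Ne, ascPochhammer_eval_eq_zero_iff]
  rintro ⟨k, -, hk⟩
  have hcast : (2 * k + 1 : K) = 2 * s := by linear_combination 2 * hk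
  have hodd : 2 * k + 1 = 2 * s := mod_cast hcast
  lia

theorem cast_choose_succ_mul (R : Type*) [CommRing R] (n k : ℕ) :
    (n.choose (k + 1) : R) * (k + 1) = n.choose k * (n - k) := by
  rcases le_or_gt k n with h | h
  · exact_mod_cast congrArg (Nat.cast (R := R)) (n.choose_succ_right_eq k)
  · simp [Nat.choose_eq_zero_of_lt h, Nat.choose_eq_zero_of_lt (h.trans k.lt_succ_self)]

theorem choose_two_mul_mul_ascPochhammer_half (s m : ℕ) :
    ((2 * s).choose (2 * m) : K) * (ascPochhammer K m).eval (1 / 2) =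
      (-1) ^ m * s.choose m * (ascPochhammer K m).eval (-s + 1 / 2 : K) := by
  induction m with
  | zero => simp
  | succ m ih =>
    have hm : (m : K) + 1 ≠ 0 := Nat.cast_add_one_ne_zero m
    have h₀ := cast_choose_succ_mul K s m
    have h₁ := cast_choose_succ_mul K (2 * s) (2 * m)
    have h₂ := cast_choose_succ_mul K (2 * s) (2 * m + 1)
    simp only [ascPochhammer_succ_eval, mul_add_one, pow_succ]
    push_cast at h₁ h₂ ⊢
    apply mul_left_cancel₀ hm
    linear_combination
      (ascPochhammer K m).eval (1 / 2) / 4 * ((2 * m + 1) * h₂ + (2 * s - 2 * m - 1) * h₁) +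
        (s - m) * (2 * s - 2 * m - 1) / 2 * ih +
        (-1) ^ m * (ascPochhammer K m).eval (-s + 1 / 2 : K) * (m - s + 1 / 2) * h₀

theorem neg_natCast_add_natCast_ne_zero {j k : ℕ} (h : k < j) : (-j + k : K) ≠ 0 := by
  rw [neg_add_eq_sub, sub_ne_zero]
  exact_mod_cast h.ne

theorem two_mul_neg_natCast_add_natCast_ne_zero {s k : ℕ} (h : k < 2 * s) :
    (2 * -s + k : K) ≠ 0 := by
  simpa using neg_natCast_add_natCast_ne_zero (K := K) h

theorem choose_two_mul_mul_watsonSum_two_mul {j m s : ℕ} (hm : 2 * m ≤ j) (hj : j ≤ s) :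
    ((2 * s).choose (2 * m) : K) * watsonSum (2 * m) (-s : K) (-j) =
      s.choose m * ((s - j).ascFactorial m / j.descFactorial m) := by
  have hsub : (-j - -s : K) = (s - j : ℕ) := by push_cast [hj]; ring
  have hhalf : ((2 * s).choose (2 * m) : K) *
      ((ascPochhammer K m).eval (1 / 2) / (ascPochhammer K m).eval (-s + 1 / 2 : K)) =
        (-1) ^ m * s.choose m := by
    rw [← mul_div_assoc, choose_two_mul_mul_ascPochhammer_half,
      mul_div_cancel_right₀ _ (ascPochhammer_eval_half_sub_natCast_ne_zero s m)]
  rw [watsonSum_two_mul m (fun k hk ↦ neg_natCast_add_natCast_ne_zero (by lia))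
      (fun k hk ↦ two_mul_neg_natCast_add_natCast_ne_zero (by lia)),
    hsub, ← Nat.cast_ascFactorial, ascPochhammer_eval_neg_natCast, ← div_mul_div_comm,
    ← mul_assoc, hhalf]
  field_simp

theorem inv_choose_mul_choose {j m s : ℕ} (hj : j ≤ s) (hm : m ≤ s) :
    (s.choose j : K)⁻¹ * s.choose m =
      j.factorial * (s - j).factorial / ((s - m).factorial * m.factorial) := by
  have : (s.factorial : K) ≠ 0 := mod_cast s.factorial_ne_zero
  rw [Nat.cast_choose K hj, Nat.cast_choose K hm]
  field_simp

theorem inv_choose_mul_choose_mul_watsonSum_two_mul {i j m s : ℕ} (hj : j = i + 2 * m)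
    (his : i < s) (hjs : j ≤ s) :
    (s.choose j : K)⁻¹ * (2 * s).choose (2 * m) * watsonSum (2 * m) (-s : K) (-j) =
      (s - j) * ((s - 1 - (i + m)).factorial * (i + m).factorial) /
        ((s - m).factorial * m.factorial) := by
  have hdesc : (j.factorial : K) = (i + m).factorial * j.descFactorial m := by
    rw [← Nat.factorial_mul_descFactorial (show m ≤ j by lia), show j - m = i + m by lia,
      Nat.cast_mul]
  have hdesc₀ : (j.descFactorial m : K) ≠ 0 := by
    simpa [Nat.descFactorial_eq_zero_iff_lt] using (show m ≤ j by lia)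
  have hasc : ((s - j).factorial * (s - j).ascFactorial m : K) =
      (s - j) * (s - 1 - (i + m)).factorial := by
    rw [show s - 1 - (i + m) = s - j + m - 1 by lia, ← Nat.cast_sub hjs]
    exact_mod_cast factorial_mul_ascFactorial_of_pos (by lia)
  calc (s.choose j : K)⁻¹ * (2 * s).choose (2 * m) * watsonSum (2 * m) (-s : K) (-j)
      = (s.choose j : K)⁻¹ * s.choose m * ((s - j).ascFactorial m / j.descFactorial m) := by
        rw [mul_assoc, choose_two_mul_mul_watsonSum_two_mul (by lia) hjs, mul_assoc]
    _ = j.factorial * (s - j).factorial / ((s - m).factorial * m.factorial) *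
          ((s - j).ascFactorial m / j.descFactorial m) := by
        rw [inv_choose_mul_choose hjs (by lia)]
    _ = (s - j).factorial * (s - j).ascFactorial m * (i + m).factorial /
          ((s - m).factorial * m.factorial) := by
        rw [hdesc]
        field_simp
    _ = (s - j) * ((s - 1 - (i + m)).factorial * (i + m).factorial) /
          ((s - m).factorial * m.factorial) := by
        rw [hasc, mul_assoc]

theorem sum_choose_eq_watsonSum {i j s : ℕ} (hij : i ≤ j) (hjs : j ≤ s) :
    ∑ ℓ ∈ Finset.range (j - i + 1),
        (-1 : K) ^ ℓ * ((s - ℓ).choose (j - ℓ) : K)⁻¹ * ((2 * s - ℓ).choose (j - i - ℓ) : K) *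
          ((i + j + 1).choose ℓ : K) =
      (s.choose j : K)⁻¹ * (2 * s).choose (j - i) * watsonSum (j - i) (-s : K) (-j) := by
  rw [watsonSum, Finset.mul_sum]
  refine Finset.sum_congr rfl fun ℓ hℓ ↦ ?_
  have hℓ : ℓ ≤ j - i := Finset.mem_range_succ_iff.mp hℓ
  have hb : 2 * (-j : K) - -(j - i : ℕ) - 1 = -(i + j + 1 : ℕ) := by push_cast [hij]; ring
  have he : 2 * (-s : K) = -(2 * s : ℕ) := by push_cast; ring
  rw [hypergeometricTerm_neg_natCast _ (by lia) hℓ (by lia) (by lia), watsonTerm, hb, he]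

theorem combinatorial_identity_general {i j s : ℕ} (hij : i ≤ j) (his : i < s) (hjs : j ≤ s) :
    ∑ ℓ ∈ Finset.range (j - i + 1),
        (-1 : K) ^ ℓ * ((s - ℓ).choose (j - ℓ) : K)⁻¹ * ((2 * s - ℓ).choose (j - i - ℓ) : K) *
          ((i + j + 1).choose ℓ : K) =
      if i % 2 = j % 2 then
        ((s : K) - j) * ((s - 1 - (i + j) / 2).factorial * ((i + j) / 2).factorial) /
          ((s - (j - i) / 2).factorial * ((j - i) / 2).factorial)
      else 0 := by
  rw [sum_choose_eq_watsonSum hij hjs]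
  obtain ⟨n, rfl⟩ := Nat.exists_eq_add_of_le hij
  rw [Nat.add_sub_cancel_left]
  obtain ⟨m, rfl | rfl⟩ := n.even_or_odd'
  · rw [if_pos (by lia), inv_choose_mul_choose_mul_watsonSum_two_mul rfl his hjs,
      show (i + (i + 2 * m)) / 2 = i + m by lia, Nat.mul_div_cancel_left m two_pos]
  · rw [if_neg (by lia), watsonSum_two_mul_add_one m
      (fun k hk ↦ neg_natCast_add_natCast_ne_zero (by lia))
      (fun k hk ↦ two_mul_neg_natCast_add_natCast_ne_zero (by lia)), mul_zero]

end Specialization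

/-- The combinatorial identity of Lemma 3.3: for `0 ≤ i ≤ j ≤ s-1`,
`∑_{ℓ=0}^{j-i} (-1)^ℓ C(s-ℓ, j-ℓ)⁻¹ C(2s-ℓ, j-i-ℓ) C(i+j+1, ℓ)` equals
`(s-j) (s-1-(i+j)/2)! ((i+j)/2)! / ((s-(j-i)/2)! ((j-i)/2)!)` if `i ≡ j (mod 2)`,
and `0` otherwise. -/
theorem combinatorial_identity (i j s : ℕ) (hs : 1 ≤ s) (hij : i ≤ j) (hj : j ≤ s - 1) :
    ∑ ℓ ∈ Finset.range (j - i + 1),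
        (-1 : ℝ) ^ ℓ * ((Nat.choose (s - ℓ) (j - ℓ) : ℝ))⁻¹ *
          (Nat.choose (2 * s - ℓ) (j - i - ℓ) : ℝ) * (Nat.choose (i + j + 1) ℓ : ℝ) =
      if i % 2 = j % 2 then
        ((s : ℝ) - (j : ℝ)) *
          ((Nat.factorial (s - 1 - (i + j) / 2) : ℝ) * (Nat.factorial ((i + j) / 2) : ℝ)) /
            ((Nat.factorial (s - (j - i) / 2) : ℝ) * (Nat.factorial ((j - i) / 2) : ℝ))
      else 0 :=
  combinatorial_identity_general hij (by lia) (by lia)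
end

section
/- Let V be a real Hilbert space, L : V → V a bounded linear operator with ⟨Lv,v⟩ ≤ 0 for all v, and let s be a positive integer. Let P = ∑_{i=0}^s θ_i (τL)^i and Q = ∑_{i=0}^s (-1)^i θ_i (τL)^i with θ_i = s!(2s-i)!/((2s)! i!(s-i)!), and assume Q is invertible. Then the (s,s) diagonal Padé time-stepping u^{n+1} = Q^{-1}P u^n satisfies ‖u^{n+1}‖ ≤ ‖u^n‖ for every τ > 0. -/
open scoped RealInnerProductSpace

/-!
Write `A = τL`, and let `E` and `O` be the even and odd parts of the Padé numerator, so that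
`P = E(A) + O(A)` and `Q = E(A) - O(A)`. Then `‖P w‖² - ‖Q w‖² = 4 ⟪O(A) w, E(A) w⟫`. Since
`e^z = (1 + tanh (z/2)) / (1 - tanh (z/2))`, the quotient `O / E` is a convergent of the continued
fraction `tanh (z/2) = (z/2) / (1 + (z²/12) / (1 + (z²/60) / (1 + ⋯)))`, in which every partial
numerator after the first is a positive multiple of `z²`. Peeling off the layers of this fraction
from the outside turns the inner product into a sum of nonnegative multiples of terms
`⟪A v, v⟫ ≤ 0`.
-/

namespace Pade

open Polynomial Finset

section Continuant

variable {R : Type*} [CommSemiring R]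

/-- The Euler continuant of the continued fraction `1 + b₀X² / (1 + b₁X² / (1 + ⋯))`: truncated
after `n` partial numerators, this fraction equals
`continuant b (n + 1) / continuant (b <| · + 1) n`. -/
noncomputable def continuant (b : ℕ → R) : ℕ → R[X]
  | 0 => 1
  | 1 => 1
  | n + 2 => continuant (b <| · + 1) (n + 1) + C (b 0) * X ^ 2 * continuant (b <| · + 2) n

theorem continuant_add_two_last (b : ℕ → R) (n : ℕ) :
    continuant b (n + 2) = continuant b (n + 1) + C (b n) * X ^ 2 * continuant b n := by
  induction n using Nat.twoStepInduction generalizing b with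
  | zero => simp only [continuant]
  | one => simp only [continuant]; ring
  | more n ih₀ ih₁ =>
    calc continuant b (n + 4)
        = continuant (b <| · + 1) (n + 3) + C (b 0) * X ^ 2 * continuant (b <| · + 2) (n + 2) := rfl
      _ = (continuant (b <| · + 1) (n + 2) + C (b 0) * X ^ 2 * continuant (b <| · + 2) (n + 1)) +
            C (b (n + 2)) * X ^ 2 *
              (continuant (b <| · + 1) (n + 1) + C (b 0) * X ^ 2 * continuant (b <| · + 2) n) := by
          rw [ih₀ (b <| · + 2), ih₁ (b <| · + 1)]; ring
      _ = continuant b (n + 3) + C (b (n + 2)) * X ^ 2 * continuant b (n + 2) := rfl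

theorem aeval_neg_continuant {S : Type*} [Ring S] [Algebra R S] (b : ℕ → R) (a : S) (n : ℕ) :
    aeval (-a) (continuant b n) = aeval a (continuant b n) := by
  induction n using Nat.twoStepInduction generalizing b with
  | zero | one => simp only [continuant, map_one]
  | more n ih₀ ih₁ =>
    simp only [continuant, map_add, map_mul, map_pow, aeval_X, aeval_C, neg_sq, ih₀, ih₁]

end Continuant

section Numerator

variable (K : Type*) [Field K]

/-- The coefficient `θ_i` of the `(n, n)` Padé approximation of the exponential, written as a
quotient that vanishes for `i > n`; see `padeCoeff_eq_factorial` for the usual formula. -/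
def padeCoeff (n i : ℕ) : K := n.choose i / (2 * n).descFactorial i

/-- The numerator of the `(n, n)` Padé approximation of the exponential. The denominator is
obtained from it by evaluating at the opposite point. -/
noncomputable def padeNumerator (n : ℕ) : K[X] :=
  ∑ i ∈ range (n + 1), C (padeCoeff K n i) * X ^ i

/-- The coefficients of the continued fraction
`tanh (z/2) = (z/2) / (1 + b₀z² / (1 + b₁z² / (1 + ⋯)))`. -/
def padeWeight (n : ℕ) : K := 1 / (4 * (2 * n + 1) * (2 * n + 3))

theorem padeCoeff_zero (n : ℕ) : padeCoeff K n 0 = 1 := by simp [padeCoeff]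

theorem padeCoeff_eq_zero_of_lt {n i : ℕ} (h : n < i) : padeCoeff K n i = 0 := by
  simp [padeCoeff, Nat.choose_eq_zero_of_lt h]

theorem coeff_padeNumerator (n i : ℕ) : (padeNumerator K n).coeff i = padeCoeff K n i := by
  simp only [padeNumerator, finsetSum_coeff, coeff_C_mul_X_pow, sum_ite_eq, mem_range,
    ite_eq_left_iff, not_lt]
  exact fun h ↦ (padeCoeff_eq_zero_of_lt K h).symm

theorem padeNumerator_zero : padeNumerator K 0 = 1 := by
  simp [padeNumerator, padeCoeff_zero]

theorem aeval_padeNumerator {S : Type*} [Semiring S] [Algebra K S] (a : S) (n : ℕ) :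
    aeval a (padeNumerator K n) = ∑ i ∈ range (n + 1), padeCoeff K n i • a ^ i := by
  simp [padeNumerator, Algebra.smul_def]

theorem aeval_neg_padeNumerator {S : Type*} [Ring S] [Algebra K S] (a : S) (n : ℕ) :
    aeval (-a) (padeNumerator K n) =
      ∑ i ∈ range (n + 1), ((-1) ^ i * padeCoeff K n i) • a ^ i := by
  rw [aeval_padeNumerator]
  refine sum_congr rfl fun i _ ↦ ?_
  rw [← neg_one_smul K a, _root_.smul_pow, smul_smul, mul_comm]

variable [CharZero K]

theorem padeCoeff_eq_factorial {n i : ℕ} (h : i ≤ n) :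
    padeCoeff K n i = (n.factorial * (2 * n - i).factorial : K) /
      ((2 * n).factorial * i.factorial * (n - i).factorial) := by
  rw [padeCoeff, Nat.cast_choose K h, Nat.descFactorial_eq_div (by lia),
    Nat.cast_div (Nat.factorial_dvd_factorial (Nat.sub_le _ _)) (by simp [Nat.factorial_ne_zero])]
  field_simp

theorem padeCoeff_succ_one (n : ℕ) : padeCoeff K (n + 1) 1 = 1 / 2 := by
  have : (n : K) + 1 ≠ 0 := n.cast_add_one_ne_zero
  simp only [padeCoeff, Nat.choose_one_right, Nat.descFactorial_one]
  push_cast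
  field_simp

theorem cast_descFactorial_ne_zero {n k : ℕ} (h : k ≤ n) : (n.descFactorial k : K) ≠ 0 :=
  mod_cast Nat.descFactorial_eq_zero_iff_lt.not.mpr h.not_gt

theorem padeCoeff_succ_right (n i : ℕ) :
    (2 * n - i) * (i + 1) * padeCoeff K n (i + 1) = (n - i) * padeCoeff K n i := by
  obtain hni | hin := le_or_gt n i
  · rw [padeCoeff_eq_zero_of_lt K (i := i + 1) (by lia), mul_zero]
    obtain rfl | hlt := hni.eq_or_lt
    · rw [sub_self, zero_mul]
    · rw [padeCoeff_eq_zero_of_lt K hlt, mul_zero]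
  have hchoose : (n.choose (i + 1) * (i + 1) : K) = n.choose i * (n - i) := by
    rw [← Nat.cast_sub hin.le]
    exact_mod_cast n.choose_succ_right_eq i
  have hdesc : ((2 * n).descFactorial (i + 1) : K) = (2 * n - i) * (2 * n).descFactorial i := by
    rw [Nat.descFactorial_succ, Nat.cast_mul, Nat.cast_sub (by lia), Nat.cast_mul, Nat.cast_ofNat]
  have hdesc_ne_zero : ((2 * n).descFactorial i : K) ≠ 0 :=
    cast_descFactorial_ne_zero K (by lia)
  have hdesc_succ_ne_zero : ((2 * n).descFactorial (i + 1) : K) ≠ 0 :=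
    cast_descFactorial_ne_zero K (by lia)
  rw [padeCoeff, padeCoeff]
  field_simp
  linear_combination
    ((2 * n - i) * (2 * n).descFactorial i : K) * hchoose - (n - i) * n.choose i * hdesc

theorem padeCoeff_succ_succ (n i : ℕ) :
    2 * (2 * n + 1) * (i + 1) * padeCoeff K (n + 1) (i + 1) =
      (2 * n + 1 - i) * padeCoeff K n i := by
  obtain hni | hin := lt_or_ge n i
  · rw [padeCoeff_eq_zero_of_lt K hni, padeCoeff_eq_zero_of_lt K (by lia), mul_zero, mul_zero]
  have hchoose : ((n + 1).choose (i + 1) * (i + 1) : K) = (n + 1) * n.choose i :=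
    mod_cast (n.add_one_mul_choose_eq i).symm
  have hdesc_left : (2 * n + 1 - i : K) * (2 * n + 1).descFactorial i =
      (2 * n + 1) * (2 * n).descFactorial i := by
    have h := congrArg (Nat.cast (R := K)) ((2 * n).succ_descFactorial i)
    rw [Nat.cast_mul, Nat.cast_sub (by lia)] at h
    exact_mod_cast h
  have hdesc : (2 * n + 1 - i) * ((2 * (n + 1)).descFactorial (i + 1) : K) =
      2 * (n + 1) * (2 * n + 1) * (2 * n).descFactorial i := by
    rw [show 2 * (n + 1) = 2 * n + 1 + 1 by ring, Nat.succ_descFactorial_succ]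
    push_cast
    linear_combination (2 * n + 2 : K) * hdesc_left
  have hdesc_ne_zero : ((2 * n).descFactorial i : K) ≠ 0 :=
    cast_descFactorial_ne_zero K (by lia)
  have hdesc_succ_ne_zero : ((2 * (n + 1)).descFactorial (i + 1) : K) ≠ 0 :=
    cast_descFactorial_ne_zero K (by lia)
  rw [padeCoeff, padeCoeff]
  field_simp
  linear_combination (2 * (2 * n + 1) * (2 * n).descFactorial i : K) * hchoose - n.choose i * hdesc

theorem padeCoeff_add_two_add_two (n i : ℕ) :
    padeCoeff K (n + 2) (i + 2) =
      padeCoeff K (n + 1) (i + 2) + padeWeight K n * padeCoeff K n i := by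
  obtain hni | hin := lt_or_ge n i
  · rw [padeCoeff_eq_zero_of_lt K hni, padeCoeff_eq_zero_of_lt K (i := i + 2) (by lia),
      padeCoeff_eq_zero_of_lt K (i := i + 2) (by lia), mul_zero, add_zero]
  have hn₁ : (2 * n + 1 : K) ≠ 0 := mod_cast (2 * n).succ_ne_zero
  have hn₃ : (2 * n + 3 : K) ≠ 0 := mod_cast (2 * n + 2).succ_ne_zero
  have hi₂ : (i + 2 : K) ≠ 0 := mod_cast (i + 1).succ_ne_zero
  have hin' : (2 * n + 1 - i : K) ≠ 0 := by
    rw [sub_ne_zero]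
    exact_mod_cast (show 2 * n + 1 ≠ i by lia)
  -- All three coefficients are explicit multiples of `padeCoeff K (n + 1) (i + 1)`.
  have hdiag := padeCoeff_succ_succ K n i
  have hdiag_succ := padeCoeff_succ_succ K (n + 1) (i + 1)
  have hright := padeCoeff_succ_right K (n + 1) (i + 1)
  push_cast at hdiag_succ hright
  rw [padeWeight]
  field_simp
  refine mul_left_cancel₀ (mul_ne_zero hi₂ hin') ?_
  linear_combination 2 * (2 * n + 1) * (2 * n + 1 - i) * hdiag_succ -
    4 * (2 * n + 1) * (2 * n + 3) * hright + (i + 2) * hdiag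

theorem padeNumerator_one : padeNumerator K 1 = 1 + C (1 / 2) * X := by
  rw [padeNumerator, sum_range_succ, sum_range_one, padeCoeff_zero, padeCoeff_succ_one K 0]
  simp

theorem padeNumerator_add_two (n : ℕ) :
    padeNumerator K (n + 2) =
      padeNumerator K (n + 1) + C (padeWeight K n) * X ^ 2 * padeNumerator K n := by
  ext i
  rw [coeff_add, mul_assoc, coeff_C_mul, X_pow_mul, coeff_mul_X_pow']
  simp only [coeff_padeNumerator]
  obtain _ | _ | i := i
  · simp [padeCoeff_zero]
  · simp [padeCoeff_succ_one]
  · simpa using padeCoeff_add_two_add_two K n i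

theorem padeNumerator_succ_eq_continuant (n : ℕ) :
    padeNumerator K (n + 1) = continuant (padeWeight K) (n + 1) +
      C (1 / 2) * X * continuant (padeWeight K <| · + 1) n := by
  induction n using Nat.twoStepInduction with
  | zero => simp only [zero_add, padeNumerator_one, continuant, mul_one]
  | one =>
    simp only [padeNumerator_add_two K 0, zero_add, padeNumerator_one, padeNumerator_zero,
      continuant]
    ring
  | more n ih₀ ih₁ =>
    rw [padeNumerator_add_two, ih₀, ih₁, continuant_add_two_last (padeWeight K) (n + 1),
      continuant_add_two_last (padeWeight K <| · + 1) n]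
    ring

end Numerator

section Dissipative

theorem aeval_apply_comm {R M : Type*} [CommSemiring R] [AddCommMonoid M] [Module R M]
    (A : Module.End R M) (p : R[X]) (v : M) : aeval A p (A v) = A (aeval A p v) := by
  simpa using LinearMap.congr_fun ((Commute.all p X).map (aeval A)).eq v

variable {V : Type*} [SeminormedAddCommGroup V] [InnerProductSpace ℝ V]

theorem norm_add_le_norm_sub_of_inner_nonpos {x y : V} (h : ⟪x, y⟫ ≤ 0) : ‖x + y‖ ≤ ‖x - y‖ := by
  rw [← sq_le_sq₀ (norm_nonneg _) (norm_nonneg _), norm_add_sq_real, norm_sub_sq_real]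
  linarith

theorem inner_aeval_continuant_nonpos {A : Module.End ℝ V} (hA : ∀ v, ⟪A v, v⟫ ≤ 0)
    {b : ℕ → ℝ} (hb : ∀ i, 0 ≤ b i) (n : ℕ) (w : V) :
    ⟪A (aeval A (continuant (b <| · + 1) n) w), aeval A (continuant b (n + 1)) w⟫ ≤ 0 := by
  induction n generalizing b w with
  | zero => simpa [continuant] using hA w
  | succ n ih =>
    set E := aeval A (continuant (b <| · + 1) (n + 1))
    set F := aeval A (continuant (b <| · + 2) n)
    have hunfold : aeval A (continuant b (n + 2)) w = E w + b 0 • A (F (A w)) := by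
      simp [continuant, E, F, aeval_apply_comm, pow_two]
    calc ⟪A (E w), aeval A (continuant b (n + 2)) w⟫
        = ⟪A (E w), E w⟫ + b 0 * ⟪A (F (A w)), E (A w)⟫ := by
          rw [hunfold, inner_add_right, real_inner_smul_right, ← aeval_apply_comm A _ w,
            real_inner_comm (E (A w))]
      _ ≤ 0 := add_nonpos (hA _) <|
          mul_nonpos_of_nonneg_of_nonpos (hb 0) (ih (fun i ↦ hb (i + 1)) (A w))

theorem norm_aeval_continuant_le {A : Module.End ℝ V} (hA : ∀ v, ⟪A v, v⟫ ≤ 0)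
    {b : ℕ → ℝ} (hb : ∀ i, 0 ≤ b i) {c : ℝ} (hc : 0 ≤ c) (n : ℕ) (w : V) :
    ‖aeval A (continuant b (n + 1) + C c * X * continuant (b <| · + 1) n) w‖ ≤
      ‖aeval (-A) (continuant b (n + 1) + C c * X * continuant (b <| · + 1) n) w‖ := by
  set E := aeval A (continuant b (n + 1)) w with hE
  set O := A (aeval A (continuant (b <| · + 1) n) w) with hO
  have hinner : ⟪E, c • O⟫ ≤ 0 := by
    rw [real_inner_smul_right, real_inner_comm]
    exact mul_nonpos_of_nonneg_of_nonpos hc (inner_aeval_continuant_nonpos hA hb n w)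
  simpa [aeval_neg_continuant, hE, hO, ← sub_eq_add_neg] using
    norm_add_le_norm_sub_of_inner_nonpos hinner

theorem norm_aeval_padeNumerator_le {A : Module.End ℝ V} (hA : ∀ v, ⟪A v, v⟫ ≤ 0)
    (n : ℕ) (w : V) :
    ‖aeval A (padeNumerator ℝ n) w‖ ≤ ‖aeval (-A) (padeNumerator ℝ n) w‖ := by
  obtain _ | n := n
  · simp [padeNumerator_zero]
  have hweight (i : ℕ) : 0 ≤ padeWeight ℝ i := by
    rw [padeWeight]
    positivity
  rw [padeNumerator_succ_eq_continuant]
  exact norm_aeval_continuant_le hA hweight one_half_pos.le n w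

end Dissipative

end Pade

theorem pade_unconditional_strong_stability_general
    {V : Type*} [SeminormedAddCommGroup V] [InnerProductSpace ℝ V]
    (L : V →ₗ[ℝ] V) (hL : ∀ v : V, ⟪L v, v⟫ ≤ 0) (s : ℕ) {τ : ℝ} (hτ : 0 ≤ τ) (θ : ℕ → ℝ)
    (hθ : ∀ i ≤ s, θ i =
      ((Nat.factorial s : ℝ) * (Nat.factorial (2 * s - i) : ℝ)) /
        ((Nat.factorial (2 * s) : ℝ) * (Nat.factorial i : ℝ) * (Nat.factorial (s - i) : ℝ)))
    (w : V) :
    ‖(∑ i ∈ Finset.range (s + 1), θ i • (τ • L) ^ i) w‖ ≤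
      ‖(∑ i ∈ Finset.range (s + 1), ((-1 : ℝ) ^ i * θ i) • (τ • L) ^ i) w‖ := by
  have hτL (v : V) : ⟪(τ • L) v, v⟫ ≤ 0 := by
    rw [LinearMap.smul_apply, real_inner_smul_left]
    exact mul_nonpos_of_nonneg_of_nonpos hτ (hL v)
  have hcoeff (i : ℕ) (hi : i ∈ Finset.range (s + 1)) : θ i = Pade.padeCoeff ℝ s i := by
    have his : i ≤ s := Finset.mem_range_succ_iff.mp hi
    rw [hθ i his, Pade.padeCoeff_eq_factorial ℝ his]
  convert Pade.norm_aeval_padeNumerator_le hτL s w using 3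
  · rw [Pade.aeval_padeNumerator]
    exact Finset.sum_congr rfl fun i hi ↦ by rw [hcoeff i hi]
  · rw [Pade.aeval_neg_padeNumerator]
    exact Finset.sum_congr rfl fun i hi ↦ by rw [hcoeff i hi]

/-- Unconditional strong stability of the `(s,s)` diagonal Padé time-stepping:
with `θ_i = s!(2s-i)!/((2s)! i!(s-i)!)`, `P = ∑_{i=0}^s θ_i (τL)^i`,
`Q = ∑_{i=0}^s (-1)^i θ_i (τL)^i`, `Q` invertible, and `u^{n+1} = Q⁻¹ P u^n`,
one has `‖u^{n+1}‖ ≤ ‖u^n‖` for every `τ > 0`. -/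
theorem pade_unconditional_strong_stability
    {V : Type*} [NormedAddCommGroup V] [InnerProductSpace ℝ V] [CompleteSpace V]
    (L : V →L[ℝ] V) (hL : ∀ v : V, ⟪L v, v⟫ ≤ 0)
    (s : ℕ) (hs : 0 < s) (τ : ℝ) (hτ : 0 < τ)
    (θ : ℕ → ℝ)
    (hθ : ∀ i ≤ s, θ i =
      ((Nat.factorial s : ℝ) * (Nat.factorial (2 * s - i) : ℝ)) /
        ((Nat.factorial (2 * s) : ℝ) * (Nat.factorial i : ℝ) * (Nat.factorial (s - i) : ℝ)))
    (P Q : V →L[ℝ] V)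
    (hP : P = ∑ i ∈ Finset.range (s + 1), θ i • (τ • L) ^ i)
    (hQ : Q = ∑ i ∈ Finset.range (s + 1), ((-1 : ℝ) ^ i * θ i) • (τ • L) ^ i)
    (hQinv : IsUnit Q)
    (u0 u1 w : V) (hw : Q w = u0) (hu1 : u1 = P w) :
    ‖u1‖ ≤ ‖u0‖ := by
  subst hw hu1 hP hQ
  simpa [Module.End.pow_apply] using
    pade_unconditional_strong_stability_general L.toLinearMap hL s hτ.le θ hθ w
end
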